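/- For every maximum b-matching f, every vertex i ∈ V^O, and every edge {i,j} of G with f({i,j}) > 0, the other endpoint j belongs to V^U. (Overdemanded vertices exchange only with underdemanded vertices in every Pareto-efficient b-matching.) -/

import Mathlib

variable {V : Type*} [Fintype V] [DecidableEq V]

/-- The utility of vertex `i` under the b-matching `f`: the total weight of edges incident to `i`. -/
def bmUtil (G : SimpleGraph V) [DecidableRel G.Adj] (f : Sym2 V → ℕ) (i : V) : ℕ :=
  ∑ e ∈ G.edgeFinset.filter (fun e => i ∈ e), f e

/-- `f` is a feasible b-matching for `(G, b)`. -/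
def BMFeasible (G : SimpleGraph V) [DecidableRel G.Adj] (b : V → ℕ) (f : Sym2 V → ℕ) : Prop :=
  ∀ i, bmUtil G f i ≤ b i

/-- The size of a b-matching: the total weight over all edges. -/
def bmSize (G : SimpleGraph V) [DecidableRel G.Adj] (f : Sym2 V → ℕ) : ℕ :=
  ∑ e ∈ G.edgeFinset, f e

/-- `f` is a maximum b-matching for `(G, b)`. -/
def IsMaxBM (G : SimpleGraph V) [DecidableRel G.Adj] (b : V → ℕ) (f : Sym2 V → ℕ) : Prop :=
  BMFeasible G b f ∧ ∀ g, BMFeasible G b g → bmSize G g ≤ bmSize G f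

/-- Underdemanded vertices: unsaturated in at least one maximum b-matching. -/
def VU (G : SimpleGraph V) [DecidableRel G.Adj] (b : V → ℕ) : Set V :=
  {i | ∃ f, IsMaxBM G b f ∧ bmUtil G f i < b i}

/-- Overdemanded vertices: not underdemanded, with at least one underdemanded neighbor. -/
def VO (G : SimpleGraph V) [DecidableRel G.Adj] (b : V → ℕ) : Set V :=
  {i | i ∉ VU G b ∧ ∃ j ∈ VU G b, G.Adj i j}

/-- Perfectly demanded vertices. -/
def VP (G : SimpleGraph V) [DecidableRel G.Adj] (b : V → ℕ) : Set V :=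
  {i | i ∉ VU G b ∧ i ∉ VO G b}

/-!
Let `f` and `g` be maximum b-matchings. If some vertex `w` has smaller utility in `f` than in `g`,
then `w` has a neighbor `y` with `f s(w, y) < g s(w, y)`. Since `w` is unsaturated in `f`, the
vertex `y` is saturated, so it has a neighbor `z` with `g s(y, z) < f s(y, z)`. Moving one unit of
`f` from `s(y, z)` to `s(w, y)` yields a maximum b-matching that is closer to `g` and leaves `z`
unsaturated; in particular, both altered edges meet `VU`. Iterating, and using that maximum
b-matchings have the same total utility, `f` can be given the utilities of `g` without changing it
on edges that avoid `VU`.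

Now let `i ∈ VO`, let `k` be a neighbor of `i` left unsaturated by `g`, and suppose
`0 < f s(i, j)` with `j ∉ VU`. The modification of `f` leaves `k` unsaturated and keeps
`f s(i, j)`, so that moving one more unit from `s(i, j)` to `s(k, i)` puts `j` in `VU` after all.
-/

section MoveUnit

variable {α : Type*} [DecidableEq α] {f g : α → ℕ} {r a e : α}

/-- The weight function `f` with one unit of weight moved from `r` to `a`. The subtraction is
truncated, so this is only meaningful when `0 < f r`; the case `r = a` leaves `f` unchanged. -/
def moveUnit (f : α → ℕ) (r a : α) : α → ℕ :=
  f + Pi.single a 1 - Pi.single r 1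

theorem moveUnit_add_single (hr : 0 < f r) :
    moveUnit f r a + Pi.single r 1 = f + Pi.single a 1 :=
  tsub_add_cancel_of_le <|
    (update_le_iff.2 ⟨hr, fun _ _ => Nat.zero_le _⟩).trans le_self_add

theorem moveUnit_apply_of_ne (hr : e ≠ r) (ha : e ≠ a) : moveUnit f r a e = f e := by
  simp [moveUnit, hr, ha]

-- Truncated subtraction counts only the deficits of `f`, so lowering `f` at `r`, where it exceeds
-- `g`, costs nothing.
theorem sum_tsub_moveUnit_lt {s : Finset α} (hs : a ∈ s) (ha : f a < g a) (hr : g r < f r) :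
    ∑ e ∈ s, (g e - moveUnit f r a e) < ∑ e ∈ s, (g e - f e) := by
  have hra : a ≠ r := by rintro rfl; omega
  refine Finset.sum_lt_sum (fun e _ => ?_) ⟨a, hs, ?_⟩
  · rcases eq_or_ne e r with rfl | her
    · simp only [moveUnit, Pi.sub_apply, Pi.add_apply, Pi.single_eq_same]
      omega
    · simp only [moveUnit, Pi.sub_apply, Pi.add_apply, Pi.single_eq_of_ne her]
      omega
  · simp only [moveUnit, Pi.sub_apply, Pi.add_apply, Pi.single_eq_same, Pi.single_eq_of_ne hra]
    omega

end MoveUnit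

section BMatching

variable {G : SimpleGraph V} [DecidableRel G.Adj] {b : V → ℕ} {f g : Sym2 V → ℕ}
  {e r a : Sym2 V} {u v w y z : V}

theorem bmUtil_add : bmUtil G (f + g) v = bmUtil G f v + bmUtil G g v :=
  Finset.sum_add_distrib

omit [DecidableEq V] in
theorem bmSize_add : bmSize G (f + g) = bmSize G f + bmSize G g :=
  Finset.sum_add_distrib

theorem bmUtil_single (he : e ∈ G.edgeSet) (n : ℕ) :
    bmUtil G (Pi.single e n) v = if v ∈ e then n else 0 := by
  simp [bmUtil, Finset.sum_pi_single', he]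

theorem bmSize_single (he : e ∈ G.edgeSet) (n : ℕ) : bmSize G (Pi.single e n) = n := by
  simp [bmSize, Finset.sum_pi_single', he]

variable (G f) in
theorem sum_bmUtil : ∑ v, bmUtil G f v = 2 * bmSize G f := by
  have card_filter_mem {e : Sym2 V} (he : e ∈ G.edgeFinset) :
      (Finset.univ.filter (· ∈ e)).card = 2 := by
    rw [← Sym2.card_toFinset_of_not_isDiag e (G.not_isDiag_of_mem_edgeFinset he)]
    congr 1
    ext v
    simp
  calc ∑ v, bmUtil G f v
      = ∑ e ∈ G.edgeFinset, ∑ v, if v ∈ e then f e else 0 := by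
        simp only [bmUtil, Finset.sum_filter]
        exact Finset.sum_comm
    _ = ∑ e ∈ G.edgeFinset, 2 * f e := by
        refine Finset.sum_congr rfl fun e he => ?_
        rw [← Finset.sum_filter, Finset.sum_const, card_filter_mem he, smul_eq_mul]
    _ = 2 * bmSize G f := (Finset.mul_sum ..).symm

theorem exists_adj_lt_of_bmUtil_lt (h : bmUtil G f v < bmUtil G g v) :
    ∃ w, G.Adj v w ∧ f s(v, w) < g s(v, w) := by
  obtain ⟨e, he, hlt⟩ := Finset.exists_lt_of_sum_lt h
  rw [Finset.mem_filter, SimpleGraph.mem_edgeFinset] at he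
  obtain ⟨hadj, w, rfl⟩ := he
  exact ⟨w, hadj, hlt⟩

theorem exists_adj_lt_of_bmUtil_le (h : bmUtil G g v ≤ bmUtil G f v) (hvu : G.Adj v u)
    (hu : f s(v, u) < g s(v, u)) : ∃ w, G.Adj v w ∧ g s(v, w) < f s(v, w) := by
  by_contra! hle
  refine h.not_gt (Finset.sum_lt_sum (fun e he => ?_) ⟨s(v, u), by simp [hvu], hu⟩)
  rw [Finset.mem_filter, SimpleGraph.mem_edgeFinset] at he
  obtain ⟨hadj, w, rfl⟩ := he
  exact hle w hadj

theorem bmUtil_moveUnit_add (hr : r ∈ G.edgeSet) (ha : a ∈ G.edgeSet) (hpos : 0 < f r) (v : V) :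
    bmUtil G (moveUnit f r a) v + (if v ∈ r then 1 else 0) =
      bmUtil G f v + if v ∈ a then 1 else 0 := by
  rw [← bmUtil_single hr, ← bmUtil_single ha, ← bmUtil_add, ← bmUtil_add,
    moveUnit_add_single hpos]

theorem bmSize_moveUnit (hr : r ∈ G.edgeSet) (ha : a ∈ G.edgeSet) (hpos : 0 < f r) :
    bmSize G (moveUnit f r a) = bmSize G f := by
  have h := congrArg (bmSize G) (moveUnit_add_single (a := a) hpos)
  rwa [bmSize_add, bmSize_add, bmSize_single hr, bmSize_single ha, Nat.add_right_cancel_iff] at h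

namespace IsMaxBM

theorem bmSize_eq (hf : IsMaxBM G b f) (hg : IsMaxBM G b g) : bmSize G f = bmSize G g :=
  le_antisymm (hg.2 f hf.1) (hf.2 g hg.1)

theorem bmUtil_eq_of_adj (hf : IsMaxBM G b f) (huv : G.Adj u v) (hu : bmUtil G f u < b u) :
    bmUtil G f v = b v := by
  by_contra hne
  have hv : bmUtil G f v < b v := lt_of_le_of_ne (hf.1 v) hne
  have hfeas : BMFeasible G b (f + Pi.single s(u, v) 1) := fun x => by
    rw [bmUtil_add, bmUtil_single huv]
    split_ifs with hx
    · rcases Sym2.mem_iff.1 hx with rfl | rfl <;> assumption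
    · exact hf.1 x
  have hle := hf.2 _ hfeas
  rw [bmSize_add, bmSize_single huv] at hle
  omega

protected theorem moveUnit (hf : IsMaxBM G b f) (hwy : G.Adj w y) (hyz : G.Adj y z)
    (hw : bmUtil G f w < b w) (hpos : 0 < f s(y, z)) :
    IsMaxBM G b (moveUnit f s(y, z) s(w, y)) := by
  refine ⟨fun v => ?_, fun g hg => (hf.2 g hg).trans_eq (bmSize_moveUnit hyz hwy hpos).symm⟩
  have hutil := bmUtil_moveUnit_add (G.mem_edgeSet.2 hyz) (G.mem_edgeSet.2 hwy) hpos v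
  have hfv := hf.1 v
  rcases eq_or_ne v w with rfl | hvw
  · split_ifs at hutil <;> omega
  · have hmem : v ∈ s(w, y) → v ∈ s(y, z) := by simp +contextual [hvw]
    grind

theorem bmUtil_moveUnit_lt (hf : IsMaxBM G b f) (hwy : G.Adj w y) (hyz : G.Adj y z)
    (hw : bmUtil G f w < b w) (hpos : 0 < f s(y, z)) :
    bmUtil G (moveUnit f s(y, z) s(w, y)) z < b z := by
  have hutil := bmUtil_moveUnit_add (G.mem_edgeSet.2 hyz) (G.mem_edgeSet.2 hwy) hpos z
  have hfz := hf.1 z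
  rw [if_pos (Sym2.mem_mk_right y z)] at hutil
  rcases eq_or_ne z w with rfl | hzw
  · split_ifs at hutil <;> omega
  · rw [if_neg (by simp [hzw, hyz.ne'])] at hutil
    omega

theorem mem_VU_of_adj (hf : IsMaxBM G b f) (hwy : G.Adj w y) (hyz : G.Adj y z)
    (hw : bmUtil G f w < b w) (hpos : 0 < f s(y, z)) : z ∈ VU G b :=
  ⟨_, hf.moveUnit hwy hyz hw hpos, hf.bmUtil_moveUnit_lt hwy hyz hw hpos⟩

theorem exists_eqOn_sum_tsub_lt (hf : IsMaxBM G b f) (hg : IsMaxBM G b g)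
    (hw : bmUtil G f w < bmUtil G g w) :
    ∃ f', IsMaxBM G b f' ∧ Set.EqOn f' f (VU G b)ᶜ.sym2 ∧
      ∑ e ∈ G.edgeFinset, (g e - f' e) < ∑ e ∈ G.edgeFinset, (g e - f e) := by
  have hwb : bmUtil G f w < b w := hw.trans_le (hg.1 w)
  obtain ⟨y, hwy, hlt⟩ := exists_adj_lt_of_bmUtil_lt hw
  have hy : bmUtil G g y ≤ bmUtil G f y := (hg.1 y).trans_eq (hf.bmUtil_eq_of_adj hwy hwb).symm
  obtain ⟨z, hyz, hgt⟩ := exists_adj_lt_of_bmUtil_le hy hwy.symm (by rwa [Sym2.eq_swap])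
  have hpos : 0 < f s(y, z) := hgt.pos
  have hwU : w ∈ VU G b := ⟨f, hf, hwb⟩
  have hzU : z ∈ VU G b := hf.mem_VU_of_adj hwy hyz hwb hpos
  refine ⟨_, hf.moveUnit hwy hyz hwb hpos, fun e he => moveUnit_apply_of_ne ?_ ?_,
    sum_tsub_moveUnit_lt (by simpa using hwy) hlt hgt⟩
  · rintro rfl
    exact he.2 hzU
  · rintro rfl
    exact he.1 hwU

theorem exists_eqOn_bmUtil_eq (hf : IsMaxBM G b f) (hg : IsMaxBM G b g) :
    ∃ f', IsMaxBM G b f' ∧ Set.EqOn f' f (VU G b)ᶜ.sym2 ∧ bmUtil G f' = bmUtil G g := by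
  induction hn : ∑ e ∈ G.edgeFinset, (g e - f e) using Nat.strong_induction_on generalizing f with
  | _ n ih =>
    by_cases! hw : ∃ w, bmUtil G f w < bmUtil G g w
    · obtain ⟨w, hw⟩ := hw
      obtain ⟨f₁, hf₁, heq₁, hlt⟩ := hf.exists_eqOn_sum_tsub_lt hg hw
      obtain ⟨f', hf', heq, hutil⟩ := ih _ (hn ▸ hlt) hf₁ rfl
      exact ⟨f', hf', heq.trans heq₁, hutil⟩
    · have hsum : ∑ v, bmUtil G g v = ∑ v, bmUtil G f v := by
        rw [sum_bmUtil, sum_bmUtil, hf.bmSize_eq hg]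
      have hutil := (Finset.sum_eq_sum_iff_of_le fun v _ => hw v).1 hsum
      exact ⟨f, hf, Set.eqOn_refl f _, funext fun v => (hutil v (Finset.mem_univ v)).symm⟩

end IsMaxBM

end BMatching

/-- in every maximum b-matching, overdemanded vertices exchange only with
underdemanded vertices. -/
theorem stmt_4 (G : SimpleGraph V) [DecidableRel G.Adj] (b : V → ℕ)
    (f : Sym2 V → ℕ) (hf : IsMaxBM G b f) (i j : V) (hi : i ∈ VO G b)
    (hadj : G.Adj i j) (hpos : 0 < f s(i, j)) : j ∈ VU G b := by
  obtain ⟨hiU, k, ⟨g, hg, hgk⟩, hik⟩ := hi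
  by_contra hjU
  obtain ⟨f', hf', heq, hutil⟩ := hf.exists_eqOn_bmUtil_eq hg
  have hpos' : 0 < f' s(i, j) := by rwa [heq (x := s(i, j)) ⟨hiU, hjU⟩]
  exact hjU (hf'.mem_VU_of_adj hik.symm hadj (by rwa [hutil]) hpos')
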